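/- arXiv:1805.09552 — 2 statements merged into one kernel-verified Lean document; each statement's English description precedes it below -/
import Mathlib

section
/- Let p : I × I → [0,∞) satisfy hypotheses (H1), (H2), (H3) and (H4). Fix z ∈ I, q ∈ (0,1), C > 0, and let b be a q-perturbation of p on Δ_z. Then there exists a constant C₂ > 0, depending only on q, S, δ₀, K, λ and C, such that for every x ∈ Δ_z and all s,t ∈ Δ_x: the series defining the Green kernel G_{b,Δ_x}(s,t) of the restriction of b to Δ_x × Δ_x converges absolutely, and |G_{b,Δ_x}(s,t) − G_{p,Δ_x}(s,t)| ≤ C₂·q^{|x|}·G_{p,Δ_x}(s,t). (Lemma 4.4 of the paper.) -/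
open scoped ENNReal

namespace Paper

/-- Words in the two letters `α, β`: the free monoid on two generators, as `List Bool`.
The head of the list is the leftmost letter. -/
abbrev Word := List Bool

/-- Length of the longest common prefix of two lists. -/
def lcpLen : List Bool → List Bool → ℕ
  | a :: s, b :: t => if a = b then lcpLen s t + 1 else 0
  | _, _ => 0

/-- Length of the longest common suffix of two words. -/
def lcsLen (s t : Word) : ℕ := lcpLen s.reverse t.reverse

/-- The tree metric on `Word`: `d(s,t) = (|s| - k) + (|t| - k)`, `k` the length of the
longest common suffix. -/
def treeDist (s t : Word) : ℕ := (s.length - lcsLen s t) + (t.length - lcsLen s t)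

/-- The branch `Δ_x = {u x : u ∈ I}` of words having `x` as a suffix. -/
def Delta (x : Word) : Set Word := {s | x <:+ s}

/-- The geodesic segment `[s,t] = {v : d(s,v) + d(v,t) = d(s,t)}`. -/
def geodesic (s t : Word) : Set Word := {v | treeDist s v + treeDist v t = treeDist s t}

/-- Paths of `n` steps from `s` to `t` staying in `Ω`. -/
def pathSet {X : Type*} (Ω : Set X) (n : ℕ) (s t : X) : Set (Fin (n + 1) → X) :=
  {σ | σ 0 = s ∧ σ (Fin.last n) = t ∧ ∀ i, σ i ∈ Ω}

/-- The weight `∏ a(s_i, s_{i+1})` of a path, as an extended nonnegative real. -/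
noncomputable def weightE {X : Type*} (a : X → X → ℝ) (n : ℕ) (σ : Fin (n + 1) → X) : ℝ≥0∞ :=
  ∏ i : Fin n, ENNReal.ofReal (a (σ i.castSucc) (σ i.succ))

/-- The `n`-step kernel `a⁽ⁿ⁾(s,t)` of the kernel `a` on `Ω`, with values in `[0,∞]`. -/
noncomputable def nStepE {X : Type*} (Ω : Set X) (a : X → X → ℝ) (n : ℕ) (s t : X) : ℝ≥0∞ :=
  ∑' σ : pathSet Ω n s t, weightE a n σ.1

/-- The Green kernel `G_a(s,t) = Σ_n a⁽ⁿ⁾(s,t)` of `a` on `Ω`, with values in `[0,∞]`. -/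
noncomputable def greenE {X : Type*} (Ω : Set X) (a : X → X → ℝ) (s t : X) : ℝ≥0∞ :=
  ∑' n : ℕ, nStepE Ω a n s t

/-- The weight of a path, real version (for signed kernels). -/
noncomputable def weightR {X : Type*} (a : X → X → ℝ) (n : ℕ) (σ : Fin (n + 1) → X) : ℝ :=
  ∏ i : Fin n, a (σ i.castSucc) (σ i.succ)

/-- The `n`-step kernel of a signed kernel `a` on `Ω`. -/
noncomputable def nStepR {X : Type*} (Ω : Set X) (a : X → X → ℝ) (n : ℕ) (s t : X) : ℝ :=
  ∑' σ : pathSet Ω n s t, weightR a n σ.1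

/-- The Green kernel of a signed kernel `a` on `Ω`, as a real number. -/
noncomputable def greenR {X : Type*} (Ω : Set X) (a : X → X → ℝ) (s t : X) : ℝ :=
  ∑' n : ℕ, nStepR Ω a n s t

/-- The Green kernel of `|a|`: finiteness of this expresses absolute convergence of the
series defining the Green kernel of `a`. -/
noncomputable def greenAbs {X : Type*} (Ω : Set X) (a : X → X → ℝ) (s t : X) : ℝ≥0∞ :=
  greenE Ω (fun u v => |a u v|) s t

/-- (H1): finite range `S`. -/
def H1 (p : Word → Word → ℝ) (S : ℕ) : Prop := ∀ s t, S < treeDist s t → p s t = 0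

/-- (H2): nonzero transition probabilities are bounded below by `δ₀`. -/
def H2 (p : Word → Word → ℝ) (δ₀ : ℝ) : Prop := ∀ s t, 0 < p s t → δ₀ ≤ p s t

/-- (H3): uniform irreducibility. -/
def H3 (p : Word → Word → ℝ) (δ₀ : ℝ) (K : ℕ) : Prop :=
  ∀ s t, treeDist s t = 1 → ∃ k ≤ K, ∃ u : ℕ → Word, u 0 = s ∧ u k = t ∧
    ∀ i < k, ∀ x : Word, δ₀ ≤ p (u i ++ x) (u (i + 1) ++ x)

/-- The operator `(Pf)(s) = Σ_t p(s,t) f(t)` extends to a bounded operator of norm at most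
`lam` on `ℓ²(X, m)`, expressed via the associated bilinear form on finitely supported
functions. -/
def opNormBound {X : Type*} (m : X → ℝ) (p : X → X → ℝ) (lam : ℝ) : Prop :=
  ∀ f g : X → ℝ, (Function.support f).Finite → (Function.support g).Finite →
    |∑' s, m s * g s * ∑' t, p s t * f t| ≤
      lam * Real.sqrt (∑' x, m x * f x ^ 2) * Real.sqrt (∑' x, m x * g x ^ 2)

/-- (H4): there is a weight `m` for which `P` is bounded of norm at most `lam` on `ℓ²(I,m)`. -/
def H4 (p : Word → Word → ℝ) (m : Word → ℝ) (lam : ℝ) : Prop :=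
  (∀ x, 0 < m x) ∧ opNormBound m p lam

/-- Substochasticity: `Σ_t p(s,t) ≤ 1` for every `s`. -/
def Substochastic (p : Word → Word → ℝ) : Prop :=
  ∀ s, (∑' t, ENNReal.ofReal (p s t)) ≤ 1

/-- `b` is a `q`-perturbation of `p` on `Δ_z` (with constant `C`). -/
def Perturb (p b : Word → Word → ℝ) (z : Word) (q C : ℝ) : Prop :=
  ∀ s t, s ∈ Delta z → t ∈ Delta z →
    |b s t| ≤ p s t ∧ |b s t - p s t| ≤ C * q ^ s.length

/-- The word `ω|k = ω(k-1) ω(k-2) ⋯ ω(0)` of length `k` determined by an end `ω`. -/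
def endWord (ω : ℕ → Bool) (k : ℕ) : Word := (List.range k).reverse.map ω

/-- The last-entrance kernel `M_p(s,u)`: sum over paths from `s` to `u` of length at least
one whose second-to-last point lies outside `Δ_x`. -/
noncomputable def lastEnter (p : Word → Word → ℝ) (x s u : Word) : ℝ≥0∞ :=
  ∑' m : ℕ, ∑' σ : {σ : Fin (m + 2) → Word //
      σ ∈ pathSet Set.univ (m + 1) s u ∧ σ ((Fin.last m).castSucc) ∉ Delta x},
    weightE p (m + 1) σ.1

/-- The quantum integer `[n]_q = (q⁻ⁿ - qⁿ)/(q⁻¹ - q)`. -/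
noncomputable def qInt (q : ℝ) (n : ℕ) : ℝ := (q ^ (-(n : ℤ)) - q ^ (n : ℤ)) / (q⁻¹ - q)

/-- The lengths of the blocks in the canonical factorization of a word into maximal
alternating subwords. -/
def blockLens : Word → List ℕ
  | [] => []
  | [_] => [1]
  | a :: b :: rest =>
    match blockLens (b :: rest) with
    | [] => [1]
    | k :: ks => if a = b then 1 :: (k :: ks) else (k + 1) :: ks

/-- The quantum dimension `dim_q(x) = Π_i [|x_i| + 1]_q` over the blocks of `x`. -/
noncomputable def dimq (q : ℝ) (x : Word) : ℝ := ((blockLens x).map fun L => qInt q (L + 1)).prod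

/-- The classical dimension `dim(x) = Π_i (|x_i| + 1)` over the blocks of `x`. -/
noncomputable def dimn (x : Word) : ℝ := ((blockLens x).map fun L => (L + 1 : ℝ)).prod

/-- The involution `x ↦ x̄`: reverse the word and exchange the two letters. -/
def bar (x : Word) : Word := (x.map fun a => !a).reverse

/-- The fusion multiplicity `mᵗ_{r,s}`: the number of words `z` such that `r = r₀ z`,
`s = z̄ s₀`, `t = r₀ s₀` for some `r₀, s₀`. -/
noncomputable def fuse (r s t : Word) : ℕ :=
  {z : Word | ∃ r₀ s₀ : Word, r = r₀ ++ z ∧ s = bar z ++ s₀ ∧ t = r₀ ++ s₀}.ncard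

/-- A finitely supported probability measure on `Word`. -/
def IsProbMeasure (μ : Word → ℝ) : Prop :=
  (∀ x, 0 ≤ μ x) ∧ (Function.support μ).Finite ∧ ∑' x, μ x = 1

/-- The transition kernel `p_μ(s,t) = Σ_r μ(r) mᵗ_{r,s} dim_q(t)/(dim_q(r) dim_q(s))`. -/
noncomputable def pMu (q : ℝ) (μ : Word → ℝ) (s t : Word) : ℝ :=
  ∑' r, μ r * (fuse r s t : ℝ) * dimq q t / (dimq q r * dimq q s)

/-- The `q`-binomial coefficient. -/
noncomputable def qbinom (q : ℝ) (n k : ℕ) : ℝ :=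
  q ^ (-((k * (n - k) : ℕ) : ℤ)) *
    ∏ i ∈ Finset.range k, (1 - q ^ (2 * (n - i))) / (1 - q ^ (2 * (k - i)))


section generic
variable {X : Type*} (P : X → X → ℝ≥0∞)

open Classical in
/-- n-step kernel, recursive. -/
noncomputable def pw : ℕ → X → X → ℝ≥0∞
  | 0, s, t => if s = t then 1 else 0
  | n + 1, s, t => ∑' u, P s u * pw n u t

/-- Green kernel. -/
noncomputable def gr (s t : X) : ℝ≥0∞ := ∑' n, pw P n s t

lemma pw_zero_self (s : X) : pw P 0 s s = 1 := by simp [pw]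

lemma pw_zero_ne {s t : X} (h : s ≠ t) : pw P 0 s t = 0 := by simp [pw, h]

lemma pw_add (n k : ℕ) (s t : X) : pw P (n + k) s t = ∑' u, pw P n s u * pw P k u t := by
  induction n generalizing s with
  | zero =>
    rw [tsum_eq_single s]
    · simp [pw]
    · intro b hb
      rw [pw_zero_ne P hb.symm, zero_mul]
  | succ n ih =>
    have h : n + 1 + k = (n + k) + 1 := by omega
    rw [h]
    simp only [pw, ih]
    simp_rw [← ENNReal.tsum_mul_left, ← ENNReal.tsum_mul_right]
    rw [ENNReal.tsum_comm]
    simp_rw [mul_assoc]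

/-- partial sums -/
lemma ps_succ (N : ℕ) (s t : X) : ∑ n ∈ Finset.range (N + 1), pw P n s t =
    pw P 0 s t + ∑' u, P s u * ∑ n ∈ Finset.range N, pw P n u t := by
  rw [Finset.sum_range_succ', add_comm]
  congr 1
  simp_rw [Finset.mul_sum]
  rw [Summable.tsum_finsetSum (fun _ _ => ENNReal.summable)]
  rfl

lemma gr_eq (s t : X) : gr P s t = pw P 0 s t + ∑' u, P s u * gr P u t := by
  unfold gr
  rw [tsum_eq_zero_add' ENNReal.summable]
  congr 1
  simp_rw [← ENNReal.tsum_mul_left]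
  rw [ENNReal.tsum_comm]
  rfl

lemma ps_le_gr (N : ℕ) (s t : X) : ∑ n ∈ Finset.range N, pw P n s t ≤ gr P s t :=
  ENNReal.sum_le_tsum _

lemma pw_le_gr (n : ℕ) (s t : X) : pw P n s t ≤ gr P s t := ENNReal.le_tsum n

lemma one_le_gr (s : X) : 1 ≤ gr P s s := by
  simpa [pw] using pw_le_gr P 0 s s

lemma Pgr_le (s t : X) : ∑' u, P s u * gr P u t ≤ gr P s t := by
  rw [gr_eq P s t]; exact le_add_self

lemma gr_le_of_ps {s t : X} {c : ℝ≥0∞} (h : ∀ N, ∑ n ∈ Finset.range N, pw P n s t ≤ c) :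
    gr P s t ≤ c := by
  unfold gr
  rw [ENNReal.tsum_eq_iSup_nat]
  exact iSup_le h

lemma gr_mul_le (s v t : X) : gr P s v * gr P v t ≤ gr P v v * gr P s t := by
  have key : ∀ N s, (∑ n ∈ Finset.range N, pw P n s v) * gr P v t ≤ gr P v v * gr P s t := by
    intro N
    induction N with
    | zero => intro s; simp
    | succ N ih =>
      intro s
      by_cases h : s = v
      · subst h
        exact mul_le_mul_left (ps_le_gr P _ _ _) _
      · rw [ps_succ, pw_zero_ne P h, zero_add, ← ENNReal.tsum_mul_right]
        calc _ ≤ ∑' u, gr P v v * (P s u * gr P u t) := by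
              refine ENNReal.tsum_le_tsum fun u => ?_
              rw [mul_assoc, mul_left_comm (gr P v v)]
              exact mul_le_mul_right (ih u) _
          _ ≤ _ := by
              rw [ENNReal.tsum_mul_left]
              exact mul_le_mul_right (Pgr_le P s t) _
  unfold gr at key ⊢
  rw [← ENNReal.tsum_mul_right, ENNReal.tsum_eq_iSup_nat]
  refine iSup_le fun N => ?_
  rw [← Finset.sum_mul]
  exact key N s

lemma cut {ι : Type*} (F : Finset ι) (g : ι → X) (E : Set X) (u : X)
    (hE : ∀ w ∈ E, (∃ f ∈ F, g f = w) ∨ (w ≠ u ∧ ∀ w', P w w' ≠ 0 → w' ∈ E)) :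
    ∀ w ∈ E, gr P w u ≤ ∑ f ∈ F, gr P w (g f) * gr P (g f) u := by
  have key : ∀ N, ∀ w ∈ E, ∑ n ∈ Finset.range N, pw P n w u ≤
      ∑ f ∈ F, gr P w (g f) * gr P (g f) u := by
    intro N
    induction N with
    | zero => intro w _; simp
    | succ N ih =>
      intro w hw
      rcases hE w hw with ⟨f, hf, rfl⟩ | ⟨hne, hst⟩
      · refine (ps_le_gr P _ _ _).trans ?_
        refine le_trans ?_ (Finset.single_le_sum (fun _ _ => zero_le) hf)
        exact le_mul_of_one_le_left zero_le (one_le_gr P _)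
      · rw [ps_succ, pw_zero_ne P hne, zero_add]
        calc _ ≤ ∑' w', ∑ f ∈ F, (P w w' * gr P w' (g f)) * gr P (g f) u := by
              refine ENNReal.tsum_le_tsum fun w' => ?_
              by_cases h0 : P w w' = 0
              · simp [h0]
              · simp_rw [mul_assoc]
                rw [← Finset.mul_sum]
                exact mul_le_mul_right (ih w' (hst w' h0)) _
          _ = ∑ f ∈ F, (∑' w', P w w' * gr P w' (g f)) * gr P (g f) u := by
              rw [Summable.tsum_finsetSum (fun _ _ => ENNReal.summable)]
              simp_rw [ENNReal.tsum_mul_right]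
          _ ≤ _ := Finset.sum_le_sum fun f _ => mul_le_mul_left (Pgr_le P _ _) _
  intro w hw
  exact gr_le_of_ps P fun N => key N w hw

lemma gr_gr_le (L : ℕ → ℝ≥0∞) (hL : ∀ n k, L (n + k) = L n * L k) (v : X)
    (h : ∀ n, pw P n v v ≤ L n) :
    ∑' u, gr P v u * gr P u v ≤ (∑' n, L n) * ∑' n, L n := by
  unfold gr
  simp_rw [← ENNReal.tsum_mul_left, ← ENNReal.tsum_mul_right]
  rw [ENNReal.tsum_comm]
  refine ENNReal.tsum_le_tsum fun n => ?_
  rw [ENNReal.tsum_comm]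
  refine ENNReal.tsum_le_tsum fun k => ?_
  rw [← pw_add]
  exact (h _).trans (le_of_eq (by rw [hL]))

/-- difference kernel -/
noncomputable def dw (e : X → X → ℝ≥0∞) : ℕ → X → X → ℝ≥0∞
  | 0, _, _ => 0
  | n + 1, s, t => ∑' u, (e s u * pw P n u t + P s u * dw e n u t)

lemma dw_sum_le (e : X → X → ℝ≥0∞) (s t : X) :
    ∑' n, dw P e n s t ≤ ∑' u, gr P s u * ∑' v, e u v * gr P v t := by
  have key : ∀ N s, ∑ n ∈ Finset.range N, dw P e n s t ≤
      ∑' u, gr P s u * ∑' v, e u v * gr P v t := by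
    intro N
    induction N with
    | zero => intro s; simp
    | succ N ih =>
      intro s
      rw [Finset.sum_range_succ']
      simp only [dw, add_zero]
      rw [← Summable.tsum_finsetSum (fun _ _ => ENNReal.summable)]
      simp_rw [Finset.sum_add_distrib, ← Finset.mul_sum]
      rw [ENNReal.tsum_add]
      calc _ ≤ (∑' v, e s v * gr P v t) +
            ∑' w, P s w * ∑' u, gr P w u * ∑' v, e u v * gr P v t := by
            gcongr
            · exact ps_le_gr P _ _ _
            · exact ih _
        _ = ∑' u, (pw P 0 s u + ∑' w, P s w * gr P w u) * ∑' v, e u v * gr P v t := by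
            simp_rw [add_mul]
            rw [ENNReal.tsum_add]
            congr 1
            · symm
              rw [tsum_eq_single s]
              · simp [pw]
              · intro b hb
                rw [pw_zero_ne P hb.symm, zero_mul]
            · simp_rw [← ENNReal.tsum_mul_left (a := P s _), ← ENNReal.tsum_mul_right (f := fun w => P s w * _)]
              rw [ENNReal.tsum_comm]
              simp_rw [mul_assoc]
        _ = _ := by simp_rw [← gr_eq]
  rw [ENNReal.tsum_eq_iSup_nat]
  exact iSup_le fun N => key N s

end generic
section paths
variable {X : Type*}

/-- Splitting off the first step of a path. -/
def pathEquiv (Ω : Set X) (n : ℕ) (s t : X) (hs : s ∈ Ω) :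
    pathSet Ω (n + 1) s t ≃ (u : Ω) × pathSet Ω n u.1 t where
  toFun σ := ⟨⟨σ.1 1, σ.2.2.2 1⟩, ⟨Fin.tail σ.1, rfl, σ.2.2.1, fun i => σ.2.2.2 i.succ⟩⟩
  invFun τ := ⟨Fin.cons s τ.2.1, rfl, by
    have := τ.2.2.2.1
    rw [← Fin.succ_last, Fin.cons_succ]; exact this, by
    intro i
    refine Fin.cases ?_ (fun j => ?_) i
    · exact hs
    · rw [Fin.cons_succ]; exact τ.2.2.2.2 j⟩
  left_inv σ := by
    apply Subtype.ext
    have h := σ.2.1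
    conv_rhs => rw [← Fin.cons_self_tail σ.1, h]
  right_inv τ := by
    obtain ⟨⟨u, hu⟩, ⟨τ, h0, h1, h2⟩⟩ := τ
    dsimp only at h0
    subst h0
    rfl

lemma path_sum (Ω : Set X) (n : ℕ) (s t : X) (hs : s ∈ Ω) (F : (Fin (n + 2) → X) → ℝ≥0∞) :
    ∑' σ : pathSet Ω (n + 1) s t, F σ.1 =
      ∑' u : Ω, ∑' τ : pathSet Ω n u.1 t, F (Fin.cons s τ.1) := by
  rw [← ENNReal.tsum_sigma (fun (u : Ω) (τ : pathSet Ω n u.1 t) => F (Fin.cons s τ.1)),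
    ← (pathEquiv Ω n s t hs).symm.tsum_eq]
  rfl

lemma path_sum_zero_ne (Ω : Set X) (s t : X) (h : s ≠ t) (F : (Fin 1 → X) → ℝ≥0∞) :
    ∑' σ : pathSet Ω 0 s t, F σ.1 = 0 := by
  have : IsEmpty (pathSet Ω 0 s t) := ⟨fun σ => h (σ.2.1.symm.trans σ.2.2.1)⟩
  simp

lemma path_sum_zero_self (Ω : Set X) (s : X) (hs : s ∈ Ω) (F : (Fin 1 → X) → ℝ≥0∞) :
    ∑' σ : pathSet Ω 0 s s, F σ.1 = F (fun _ => s) := by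
  have hm : (fun _ => s) ∈ pathSet Ω 0 s s := ⟨rfl, rfl, fun _ => hs⟩
  rw [tsum_eq_single ⟨_, hm⟩]
  intro b hb
  refine absurd (Subtype.ext (funext fun i => ?_)) hb
  rw [Subsingleton.elim (α := Fin 1) i 0]
  exact b.2.1

lemma weightE_cons (a : X → X → ℝ) (n : ℕ) (s : X) (τ : Fin (n + 1) → X) :
    weightE a (n + 1) (Fin.cons s τ : Fin (n + 2) → X) = ENNReal.ofReal (a s (τ 0)) * weightE a n τ := by
  unfold weightE
  rw [Fin.prod_univ_succ]
  rfl

lemma weightR_succ (a : X → X → ℝ) (n : ℕ) (σ : Fin (n + 2) → X) :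
    weightR a (n + 1) σ = a (σ 0) (σ 1) * weightR a n (Fin.tail σ) := by
  unfold weightR
  rw [Fin.prod_univ_succ]
  rfl

/-- Restricted kernel. -/
noncomputable def resE (Ω : Set X) (a : X → X → ℝ) (u v : Ω) : ℝ≥0∞ := ENNReal.ofReal (a u.1 v.1)

lemma nStepE_eq (Ω : Set X) (a : X → X → ℝ) (n : ℕ) (s t : Ω) :
    nStepE Ω a n s.1 t.1 = pw (resE Ω a) n s t := by
  unfold nStepE
  induction n generalizing s with
  | zero =>
    by_cases h : s = t
    · subst h
      rw [path_sum_zero_self Ω s.1 s.2, pw_zero_self]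
      simp [weightE]
    · rw [path_sum_zero_ne Ω s.1 t.1 (fun h' => h (Subtype.ext h')), pw_zero_ne _ h]
  | succ n ih =>
    rw [path_sum Ω n s.1 t.1 s.2]
    simp only [pw]
    refine tsum_congr fun u => ?_
    rw [← ih, ← ENNReal.tsum_mul_left]
    refine tsum_congr fun τ => ?_
    rw [weightE_cons, τ.2.1]
    rfl

lemma greenE_eq (Ω : Set X) (a : X → X → ℝ) (s t : Ω) :
    greenE Ω a s.1 t.1 = gr (resE Ω a) s t := by
  unfold greenE gr
  simp_rw [nStepE_eq]

/-- Derivative weight of a path. -/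
noncomputable def dsig (a b : X → X → ℝ) : (n : ℕ) → (Fin (n + 1) → X) → ℝ≥0∞
  | 0, _ => 0
  | n + 1, σ => ‖b (σ 0) (σ 1) - a (σ 0) (σ 1)‖ₑ * weightE a n (Fin.tail σ) +
      ENNReal.ofReal (a (σ 0) (σ 1)) * dsig a b n (Fin.tail σ)

lemma dsig_sum (Ω : Set X) (a b : X → X → ℝ) (n : ℕ) (s t : Ω) :
    ∑' σ : pathSet Ω n s.1 t.1, dsig a b n σ.1 =
      dw (resE Ω a) (fun u v => ‖b u.1 v.1 - a u.1 v.1‖ₑ) n s t := by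
  induction n generalizing s with
  | zero => simp [dsig, dw]
  | succ n ih =>
    rw [path_sum Ω n s.1 t.1 s.2]
    simp only [dw]
    refine tsum_congr fun u => ?_
    rw [← ih, ← nStepE_eq, nStepE, ← ENNReal.tsum_mul_left, ← ENNReal.tsum_mul_left,
      ← ENNReal.tsum_add]
    refine tsum_congr fun τ => ?_
    have h : (Fin.cons s.1 τ.1 : Fin (n + 2) → X) 1 = u.1 := τ.2.1
    simp only [dsig, Fin.cons_zero, h, Fin.tail_cons]
    rfl

lemma weightE_eq_enorm (Ω : Set X) (a : X → X → ℝ) (ha : ∀ u ∈ Ω, ∀ v ∈ Ω, 0 ≤ a u v) (n : ℕ)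
    (σ : Fin (n + 1) → X) (hσ : ∀ i, σ i ∈ Ω) : weightE a n σ = ENNReal.ofReal (weightR a n σ) := by
  unfold weightE weightR
  rw [ENNReal.ofReal_prod_of_nonneg]
  intro i _
  exact ha _ (hσ _) _ (hσ _)

lemma weightR_nonneg (Ω : Set X) (a : X → X → ℝ) (ha : ∀ u ∈ Ω, ∀ v ∈ Ω, 0 ≤ a u v) (n : ℕ)
    (σ : Fin (n + 1) → X) (hσ : ∀ i, σ i ∈ Ω) : 0 ≤ weightR a n σ :=
  Finset.prod_nonneg fun i _ => ha _ (hσ _) _ (hσ _)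

lemma dsig_bound (Ω : Set X) (a b : X → X → ℝ) (hab : ∀ u ∈ Ω, ∀ v ∈ Ω, |b u v| ≤ a u v) (n : ℕ)
    (σ : Fin (n + 1) → X) (hσ : ∀ i, σ i ∈ Ω) :
    ‖weightR b n σ - weightR a n σ‖ₑ ≤ dsig a b n σ := by
  have ha : ∀ u ∈ Ω, ∀ v ∈ Ω, 0 ≤ a u v := fun u hu v hv => (abs_nonneg _).trans (hab u hu v hv)
  induction n with
  | zero => simp [weightR, dsig]
  | succ n ih =>
    have hτ : ∀ i, Fin.tail σ i ∈ Ω := fun i => hσ i.succ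
    rw [weightR_succ, weightR_succ, dsig]
    have e : b (σ 0) (σ 1) * weightR b n (Fin.tail σ) - a (σ 0) (σ 1) * weightR a n (Fin.tail σ) =
      (b (σ 0) (σ 1) - a (σ 0) (σ 1)) * weightR a n (Fin.tail σ) +
      b (σ 0) (σ 1) * (weightR b n (Fin.tail σ) - weightR a n (Fin.tail σ)) := by ring
    rw [e]
    refine (enorm_add_le _ _).trans ?_
    rw [enorm_mul, enorm_mul]
    gcongr
    · rw [weightE_eq_enorm Ω a ha n _ hτ,
        Real.enorm_of_nonneg (weightR_nonneg Ω a ha n _ hτ)]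
    · rw [Real.enorm_eq_ofReal_abs]
      exact ENNReal.ofReal_le_ofReal (hab _ (hσ _) _ (hσ _))
    · exact ih _ hτ

lemma weight_abs_le (Ω : Set X) (a b : X → X → ℝ) (hab : ∀ u ∈ Ω, ∀ v ∈ Ω, |b u v| ≤ a u v)
    (n : ℕ) (σ : Fin (n + 1) → X) (hσ : ∀ i, σ i ∈ Ω) :
    weightE (fun u v => |b u v|) n σ ≤ weightE a n σ :=
  Finset.prod_le_prod' fun i _ => ENNReal.ofReal_le_ofReal (hab _ (hσ _) _ (hσ _))

lemma enorm_weightR (b : X → X → ℝ) (n : ℕ) (σ : Fin (n + 1) → X) :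
    ‖weightR b n σ‖ₑ = weightE (fun u v => |b u v|) n σ := by
  unfold weightR weightE
  rw [Real.enorm_eq_ofReal_abs, Finset.abs_prod, ENNReal.ofReal_prod_of_nonneg]
  intro i _
  positivity

lemma summable_of_enorm {ι : Type*} {f : ι → ℝ} (h : ∑' i, ‖f i‖ₑ ≠ ⊤) : Summable f := by
  apply Summable.of_norm
  have := ENNReal.summable_toReal h
  simpa using this

lemma greenR_eq_toReal (Ω : Set X) (a : X → X → ℝ) (ha : ∀ u ∈ Ω, ∀ v ∈ Ω, 0 ≤ a u v) (s t : X)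
    (n : ℕ) (hfin : nStepE Ω a n s t ≠ ⊤) : (nStepE Ω a n s t).toReal = nStepR Ω a n s t := by
  unfold nStepE nStepR at *
  rw [ENNReal.tsum_toReal_eq (ENNReal.ne_top_of_tsum_ne_top hfin)]
  refine tsum_congr fun σ => ?_
  rw [weightE_eq_enorm Ω a ha n _ σ.2.2.2,
    ENNReal.toReal_ofReal (weightR_nonneg Ω a ha n _ σ.2.2.2)]

lemma compare (Ω : Set X) (a b : X → X → ℝ) (hab : ∀ u ∈ Ω, ∀ v ∈ Ω, |b u v| ≤ a u v)
    (s t : Ω) (hfin : greenE Ω a s.1 t.1 < ⊤) :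
    greenAbs Ω b s.1 t.1 < ⊤ ∧
    ‖greenR Ω b s.1 t.1 - (greenE Ω a s.1 t.1).toReal‖ₑ ≤
      ∑' n, dw (resE Ω a) (fun u v => ‖b u.1 v.1 - a u.1 v.1‖ₑ) n s t := by
  have ha : ∀ u ∈ Ω, ∀ v ∈ Ω, 0 ≤ a u v := fun u hu v hv => (abs_nonneg _).trans (hab u hu v hv)
  have hn : ∀ n, nStepE Ω (fun u v => |b u v|) n s.1 t.1 ≤ nStepE Ω a n s.1 t.1 := fun n =>
    ENNReal.tsum_le_tsum fun σ => weight_abs_le Ω a b hab n _ σ.2.2.2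
  have hbfin : greenAbs Ω b s.1 t.1 < ⊤ := lt_of_le_of_lt (ENNReal.tsum_le_tsum hn) hfin
  refine ⟨hbfin, ?_⟩
  have ha_n : ∀ n, nStepE Ω a n s.1 t.1 ≠ ⊤ := ENNReal.ne_top_of_tsum_ne_top hfin.ne
  have hb_n : ∀ n, nStepE Ω (fun u v => |b u v|) n s.1 t.1 ≠ ⊤ :=
    ENNReal.ne_top_of_tsum_ne_top hbfin.ne
  have hsa_n : ∀ n, Summable fun σ : pathSet Ω n s.1 t.1 => weightR a n σ.1 := by
    intro n
    apply summable_of_enorm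
    have : ∑' σ : pathSet Ω n s.1 t.1, ‖weightR a n σ.1‖ₑ = nStepE Ω a n s.1 t.1 :=
      tsum_congr fun σ => by
        rw [weightE_eq_enorm Ω a ha n _ σ.2.2.2,
          Real.enorm_of_nonneg (weightR_nonneg Ω a ha n _ σ.2.2.2)]
    rw [this]; exact ha_n n
  have hsb_e : ∀ n, ∑' σ : pathSet Ω n s.1 t.1, ‖weightR b n σ.1‖ₑ =
      nStepE Ω (fun u v => |b u v|) n s.1 t.1 := fun n =>
    tsum_congr fun σ => enorm_weightR b n _
  have hsb_n : ∀ n, Summable fun σ : pathSet Ω n s.1 t.1 => weightR b n σ.1 := by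
    intro n
    apply summable_of_enorm
    rw [hsb_e]; exact hb_n n
  have hsa : Summable fun n => nStepR Ω a n s.1 t.1 := by
    simp_rw [← greenR_eq_toReal Ω a ha s.1 t.1 _ (ha_n _)]
    exact ENNReal.summable_toReal hfin.ne
  have hsb : Summable fun n => nStepR Ω b n s.1 t.1 := by
    apply summable_of_enorm
    refine ne_top_of_le_ne_top hbfin.ne (ENNReal.tsum_le_tsum fun n => ?_)
    unfold nStepR
    refine enorm_tsum_le_tsum_enorm.trans ?_
    rw [hsb_e]
  by_cases htop : ∑' n, dw (resE Ω a) (fun u v => ‖b u.1 v.1 - a u.1 v.1‖ₑ) n s t = ⊤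
  · rw [htop]; exact le_top
  have hd_n := ENNReal.ne_top_of_tsum_ne_top htop
  have hstep : ∀ n, ‖nStepR Ω b n s.1 t.1 - nStepR Ω a n s.1 t.1‖ₑ ≤
      dw (resE Ω a) (fun u v => ‖b u.1 v.1 - a u.1 v.1‖ₑ) n s t := by
    intro n
    have h1 : ∑' σ : pathSet Ω n s.1 t.1, ‖weightR b n σ.1 - weightR a n σ.1‖ₑ ≤
        dw (resE Ω a) (fun u v => ‖b u.1 v.1 - a u.1 v.1‖ₑ) n s t := by
      rw [← dsig_sum]
      exact ENNReal.tsum_le_tsum fun σ => dsig_bound Ω a b hab n _ σ.2.2.2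
    unfold nStepR
    rw [← (hsb_n n).tsum_sub (hsa_n n)]
    exact enorm_tsum_le_tsum_enorm.trans h1
  have hG : (greenE Ω a s.1 t.1).toReal = ∑' n, nStepR Ω a n s.1 t.1 := by
    unfold greenE
    rw [ENNReal.tsum_toReal_eq ha_n]
    exact tsum_congr fun n => greenR_eq_toReal Ω a ha s.1 t.1 _ (ha_n _)
  rw [hG, greenR, ← hsb.tsum_sub hsa]
  have h2 := ENNReal.tsum_le_tsum hstep
  exact enorm_tsum_le_tsum_enorm.trans h2

end paths
section bound
variable {X : Type*}

open Classical in
/-- Real column vector of the n-step kernel. -/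
noncomputable def colR (Ω : Set X) (p : X → X → ℝ) (t : X) : ℕ → X → ℝ
  | 0, s => if s = t then 1 else 0
  | n + 1, s => if s ∈ Ω then ∑' u, p s u * colR Ω p t n u else 0

lemma colR_nonneg (Ω : Set X) (p : X → X → ℝ) (hp : ∀ s t, 0 ≤ p s t) (t : X) (n : ℕ) (s : X) :
    0 ≤ colR Ω p t n s := by
  induction n generalizing s with
  | zero => unfold colR; split_ifs <;> simp
  | succ n ih =>
    unfold colR
    split_ifs
    · exact tsum_nonneg fun u => mul_nonneg (hp _ _) (ih u)
    · exact le_rfl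

lemma colR_supp (Ω : Set X) (p : X → X → ℝ) (t : X) (ht : t ∈ Ω) (n : ℕ) :
    Function.support (colR Ω p t n) ⊆ Ω := by
  intro s hs
  cases n with
  | zero =>
    by_contra h
    apply hs
    have : s ≠ t := fun h' => h (h' ▸ ht)
    simp [colR, this]
  | succ n =>
    by_contra h
    apply hs
    simp [colR, h]

lemma colR_fin (Ω : Set X) (p : X → X → ℝ) (hcol : ∀ u, {s | p s u ≠ 0}.Finite) (t : X) (n : ℕ) :
    (Function.support (colR Ω p t n)).Finite := by
  induction n with
  | zero =>
    refine (Set.finite_singleton t).subset fun s hs => ?_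
    by_contra h
    apply hs
    have : s ≠ t := h
    simp [colR, this]
  | succ n ih =>
    refine (ih.biUnion fun u _ => hcol u).subset fun s hs => ?_
    by_contra h
    apply hs
    simp only [Set.mem_iUnion, not_exists, Set.mem_setOf_eq, not_not] at h
    have : ∀ u, p s u * colR Ω p t n u = 0 := by
      intro u
      by_cases hu : colR Ω p t n u = 0
      · simp [hu]
      · simp [h u hu]
    simp [colR, this]

lemma colR_pw (Ω : Set X) (p : X → X → ℝ) (hp : ∀ s t, 0 ≤ p s t)
    (hcol : ∀ u, {s | p s u ≠ 0}.Finite) (s t : Ω) (n : ℕ) :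
    pw (resE Ω p) n s t = ENNReal.ofReal (colR Ω p t.1 n s.1) := by
  induction n generalizing s with
  | zero =>
    by_cases h : s = t
    · subst h; simp [pw, colR]
    · have : s.1 ≠ t.1 := fun h' => h (Subtype.ext h')
      simp [pw, colR, this, h]
  | succ n ih =>
    simp only [pw, colR, s.2, if_true]
    have hfs : (Function.support fun u => p s.1 u * colR Ω p t.1 n u).Finite :=
      (colR_fin Ω p hcol t.1 n).subset (Function.support_mul_subset_right _ _)
    rw [ENNReal.ofReal_tsum_of_nonneg (fun u => mul_nonneg (hp _ _) (colR_nonneg Ω p hp _ _ _))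
      (summable_of_finite_support hfs)]
    rw [← tsum_subtype_eq_of_support_subset (s := Ω)]
    · refine tsum_congr fun u => ?_
      rw [ENNReal.ofReal_mul (hp _ _), ih]
      rfl
    · intro u hu
      apply colR_supp Ω p t.1 t.2 n
      intro h
      apply hu
      simp [h]

lemma pw_bound (Ω : Set X) (p : X → X → ℝ) (hp : ∀ s t, 0 ≤ p s t)
    (hcol : ∀ u, {s | p s u ≠ 0}.Finite) (m : X → ℝ) (hm : ∀ x, 0 < m x) (lam : ℝ) (hl : 0 < lam)
    (hop : opNormBound m p lam) (s t : Ω) (n : ℕ) :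
    pw (resE Ω p) n s t ≤ ENNReal.ofReal (lam ^ n * (√(m t) / √(m s))) := by
  rw [colR_pw Ω p hp hcol]
  apply ENNReal.ofReal_le_ofReal
  set A : ℕ → ℝ := fun n => ∑' x, m x * colR Ω p t.1 n x ^ 2 with hA
  have hfs : ∀ n, (Function.support fun x => m x * colR Ω p t.1 n x ^ 2).Finite := fun n =>
    (colR_fin Ω p hcol t.1 n).subset fun x hx h => hx (by simp [h])
  have hA0 : ∀ n, 0 ≤ A n := fun n => tsum_nonneg fun x => mul_nonneg (hm x).le (sq_nonneg _)
  have hstep : ∀ n, √(A (n + 1)) ≤ lam * √(A n) := by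
    intro n
    have h := hop (colR Ω p t.1 n) (colR Ω p t.1 (n + 1)) (colR_fin Ω p hcol t.1 n)
      (colR_fin Ω p hcol t.1 (n + 1))
    have e : ∑' s, m s * colR Ω p t.1 (n + 1) s * ∑' u, p s u * colR Ω p t.1 n u = A (n + 1) := by
      refine tsum_congr fun s => ?_
      by_cases hs : s ∈ Ω
      · have : ∑' u, p s u * colR Ω p t.1 n u = colR Ω p t.1 (n + 1) s := by simp [colR, hs]
        rw [this]; ring
      · have : colR Ω p t.1 (n + 1) s = 0 := by simp [colR, hs]
        rw [this]; simp
    rw [e] at h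
    have h' : √(A (n + 1)) * √(A (n + 1)) ≤ lam * √(A n) * √(A (n + 1)) := by
      rw [Real.mul_self_sqrt (hA0 _)]
      exact (le_abs_self _).trans h
    by_cases h0 : √(A (n + 1)) = 0
    · rw [h0]; positivity
    · exact le_of_mul_le_mul_right h' (lt_of_le_of_ne (Real.sqrt_nonneg _) (Ne.symm h0))
  have hall : ∀ n, √(A n) ≤ lam ^ n * √(m t) := by
    intro n
    induction n with
    | zero =>
      have : A 0 = m t := by
        simp only [hA]
        rw [tsum_eq_single t.1]
        · simp [colR]
        · intro u hu; simp [colR, hu]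
      rw [this]; simp
    | succ n ih =>
      refine (hstep n).trans ?_
      rw [pow_succ']
      rw [mul_assoc]
      exact mul_le_mul_of_nonneg_left ih hl.le
  have hpt : m s * colR Ω p t.1 n s ^ 2 ≤ A n :=
    (summable_of_finite_support (hfs n)).le_tsum s.1
      (fun x _ => mul_nonneg (hm x).le (sq_nonneg _))
  have h1 : √(m s) * colR Ω p t.1 n s ≤ √(A n) := by
    have := Real.sqrt_le_sqrt hpt
    rwa [Real.sqrt_mul (hm _).le, Real.sqrt_sq (colR_nonneg Ω p hp _ _ _)] at this
  have hs0 : 0 < √(m s) := Real.sqrt_pos.2 (hm _)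
  rw [← mul_div_assoc, le_div_iff₀ hs0, mul_comm]
  exact h1.trans (hall n)

end bound

section tree

lemma lcpLen_comm (s t : List Bool) : lcpLen s t = lcpLen t s := by
  induction s generalizing t with
  | nil => cases t <;> simp [lcpLen]
  | cons a s ih =>
    cases t with
    | nil => simp [lcpLen]
    | cons b t => simp only [lcpLen, ih t, eq_comm]

lemma lcpLen_le (s t : List Bool) : lcpLen s t ≤ s.length := by
  induction s generalizing t with
  | nil => cases t <;> simp [lcpLen]
  | cons a s ih =>
    cases t with
    | nil => simp [lcpLen]
    | cons b t =>
      simp only [lcpLen, List.length_cons]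
      have := ih t
      split_ifs <;> omega

lemma lcp_prefix (w s t : List Bool) (h : w <+: t) (hl : w.length ≤ lcpLen s t) : w <+: s := by
  induction w generalizing s t with
  | nil => exact List.nil_prefix
  | cons c w ih =>
    cases t with
    | nil => simp at h
    | cons b t =>
      cases s with
      | nil => simp [lcpLen] at hl
      | cons a s =>
        rw [List.cons_prefix_cons] at h ⊢
        simp only [lcpLen, List.length_cons] at hl
        split_ifs at hl with hab
        · exact ⟨h.1.trans hab.symm, ih s t h.2 (by omega)⟩
        · omega

lemma lcs_suffix (w s t : Word) (h : w <:+ t) (hl : w.length ≤ lcsLen s t) : w <:+ s := by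
  rw [← List.reverse_prefix] at h ⊢
  exact lcp_prefix _ _ _ h (by simpa [lcsLen] using hl)

lemma treeDist_comm (s t : Word) : treeDist s t = treeDist t s := by
  unfold treeDist lcsLen
  rw [lcpLen_comm, add_comm]

lemma len_le_treeDist (s t : Word) : s.length ≤ t.length + treeDist s t := by
  have : lcsLen s t ≤ t.length := by
    unfold lcsLen
    rw [lcpLen_comm]
    simpa using lcpLen_le t.reverse s.reverse
  unfold treeDist
  omega

lemma enter_len (a : Bool) (v w w' : Word) (S : ℕ) (h : treeDist w w' ≤ S) (hw' : a :: v <:+ w')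
    (hw : ¬ a :: v <:+ w) : ∃ r : Word, r.length ≤ S ∧ r ++ a :: v = w' := by
  obtain ⟨r, rfl⟩ := hw'
  refine ⟨r, ?_, rfl⟩
  have h1 : lcsLen w (r ++ a :: v) < (a :: v).length := by
    by_contra hc
    exact hw (lcs_suffix _ _ _ (List.suffix_append _ _) (not_lt.1 hc))
  unfold treeDist at h
  simp only [List.length_cons, List.length_append] at h h1
  omega

lemma col_fin (p : Word → Word → ℝ) (S : ℕ) (h1 : H1 p S) (u : Word) : {s | p s u ≠ 0}.Finite := by
  refine (List.finite_length_le Bool (u.length + S)).subset fun s hs => ?_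
  have : treeDist s u ≤ S := by
    by_contra h
    exact hs (h1 s u (not_le.1 h))
  have := len_le_treeDist s u
  simp only [Set.mem_setOf_eq]
  omega

lemma exists_branch (x : Word) (Q : Word → Prop) (hx : Q x) (u' : Word) :
    ∃ v, x <:+ v ∧ v <:+ u' ++ x ∧ Q v ∧ (v = u' ++ x ∨ ∃ a, a :: v <:+ u' ++ x ∧ ¬ Q (a :: v)) := by
  induction u' with
  | nil => exact ⟨x, List.suffix_rfl, List.suffix_rfl, hx, Or.inl rfl⟩
  | cons a u' ih =>
    obtain ⟨v, h1, h2, h3, h4⟩ := ih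
    have hc : u' ++ x <:+ a :: u' ++ x := List.suffix_cons a _
    rcases h4 with rfl | ⟨c, h5, h6⟩
    · by_cases hQ : Q (a :: (u' ++ x))
      · exact ⟨a :: (u' ++ x), h1.trans hc, List.suffix_rfl, hQ, Or.inl rfl⟩
      · exact ⟨u' ++ x, h1, hc, h3, Or.inr ⟨a, List.suffix_rfl, hQ⟩⟩
    · exact ⟨v, h1, h2.trans hc, h3, Or.inr ⟨c, h5.trans hc, h6⟩⟩

end tree
section assembly

lemma chain {X : Type*} (P : X → X → ℝ≥0∞) (d : ℝ≥0∞) (k : ℕ) (w : ℕ → X)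
    (h : ∀ i < k, d ≤ P (w i) (w (i + 1))) : d ^ k ≤ pw P k (w 0) (w k) := by
  induction k generalizing w with
  | zero => simp [pw]
  | succ k ih =>
    have h1 := ih (fun i => w (i + 1)) fun i hi => h (i + 1) (by omega)
    rw [pow_succ']
    refine (mul_le_mul' (h 0 (by omega)) h1).trans ?_
    simp only [pw]
    exact ENNReal.le_tsum (f := fun u => P (w 0) u * pw P k u (w (k + 1))) (w 1)

lemma pw_mul_le {X : Type*} (P : X → X → ℝ≥0∞) (n k : ℕ) (s u t : X) :
    pw P n s u * pw P k u t ≤ pw P (n + k) s t := by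
  rw [pw_add]
  exact ENNReal.le_tsum (f := fun u => pw P n s u * pw P k u t) u

lemma near_right {X : Type*} (P : X → X → ℝ≥0∞) (L ε : ℝ≥0∞) (h0 : ε ≠ 0) (h1 : ε ≠ ⊤)
    (hL : ∀ v, gr P v v ≤ L) (s y v : X) (h : ε ≤ gr P y v) :
    gr P s y ≤ ε⁻¹ * L * gr P s v := by
  have h2 : ε * gr P s y ≤ L * gr P s v := by
    rw [mul_comm]
    refine (mul_le_mul_right h _).trans ((gr_mul_le P s y v).trans ?_)
    exact mul_le_mul_left (hL y) _
  calc gr P s y = ε⁻¹ * (ε * gr P s y) := by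
        rw [← mul_assoc, ENNReal.inv_mul_cancel h0 h1, one_mul]
    _ ≤ _ := by rw [mul_assoc]; exact mul_le_mul_right h2 _

lemma near_left {X : Type*} (P : X → X → ℝ≥0∞) (L ε : ℝ≥0∞) (h0 : ε ≠ 0) (h1 : ε ≠ ⊤)
    (hL : ∀ v, gr P v v ≤ L) (u y v : X) (h : ε ≤ gr P v y) :
    gr P y u ≤ ε⁻¹ * L * gr P v u := by
  have h2 : ε * gr P y u ≤ L * gr P v u := by
    refine (mul_le_mul_left h _).trans ((gr_mul_le P v y u).trans ?_)
    exact mul_le_mul_left (hL y) _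
  calc gr P y u = ε⁻¹ * (ε * gr P y u) := by
        rw [← mul_assoc, ENNReal.inv_mul_cancel h0 h1, one_mul]
    _ ≤ _ := by rw [mul_assoc]; exact mul_le_mul_right h2 _

lemma app_mem {x l : Word} (hl : l ∈ Delta x) (r : Word) : r ++ l ∈ Delta x :=
  List.IsSuffix.trans hl (List.suffix_append r l)

lemma reach (p : Word → Word → ℝ) (δ₀ : ℝ) (K : ℕ) (h3 : H3 p δ₀ K) (hδ : 0 ≤ δ₀) (x : Word)
    (r l : Word) (hl : l ∈ Delta x) :
    (∃ n ≤ K * r.length, ENNReal.ofReal δ₀ ^ n ≤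
      pw (resE (Delta x) p) n ⟨r ++ l, app_mem hl r⟩ ⟨l, hl⟩) ∧
    (∃ n ≤ K * r.length, ENNReal.ofReal δ₀ ^ n ≤
      pw (resE (Delta x) p) n ⟨l, hl⟩ ⟨r ++ l, app_mem hl r⟩) := by
  induction r with
  | nil => exact ⟨⟨0, by simp, by simp [pw]⟩, ⟨0, by simp, by simp [pw]⟩⟩
  | cons a r ih =>
    obtain ⟨⟨n, hn, hn'⟩, ⟨k, hk, hk'⟩⟩ := ih
    have hm := app_mem hl r
    constructor
    · obtain ⟨j, hj, u, hu0, huj, hu⟩ := h3 [a] [] (by cases a <;> decide)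
      have hc := chain (resE (Delta x) p) (ENNReal.ofReal δ₀) j
        (fun i => ⟨u i ++ (r ++ l), app_mem hm _⟩)
        (fun i hi => ENNReal.ofReal_le_ofReal (hu i hi _))
      simp only [hu0, huj] at hc
      refine ⟨j + n, ?_, ?_⟩
      · rw [List.length_cons, mul_add]; omega
      · rw [pow_add]
        exact (mul_le_mul' hc hn').trans (pw_mul_le _ _ _ _ _ _)
    · obtain ⟨j, hj, u, hu0, huj, hu⟩ := h3 [] [a] (by cases a <;> decide)
      have hc := chain (resE (Delta x) p) (ENNReal.ofReal δ₀) j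
        (fun i => ⟨u i ++ (r ++ l), app_mem hm _⟩)
        (fun i hi => ENNReal.ofReal_le_ofReal (hu i hi _))
      simp only [hu0, huj] at hc
      refine ⟨k + j, ?_, ?_⟩
      · rw [List.length_cons, mul_add]; omega
      · rw [pow_add]
        exact (mul_le_mul' hk' hc).trans (pw_mul_le _ _ _ _ _ _)

lemma reach_gr (p : Word → Word → ℝ) (δ₀ : ℝ) (K : ℕ) (h3 : H3 p δ₀ K) (hδ : 0 ≤ δ₀)
    (hδ1 : δ₀ ≤ 1) (x : Word) (N : ℕ)
    (r l : Word) (hl : l ∈ Delta x) (hr : r.length ≤ N) :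
    ENNReal.ofReal δ₀ ^ (K * N) ≤ gr (resE (Delta x) p) ⟨r ++ l, app_mem hl r⟩ ⟨l, hl⟩ ∧
    ENNReal.ofReal δ₀ ^ (K * N) ≤ gr (resE (Delta x) p) ⟨l, hl⟩ ⟨r ++ l, app_mem hl r⟩ := by
  obtain ⟨⟨n, hn, hn'⟩, ⟨k, hk, hk'⟩⟩ := reach p δ₀ K h3 hδ x r l hl
  have hd : ENNReal.ofReal δ₀ ≤ 1 := by simpa using hδ1
  have hm : K * r.length ≤ K * N := Nat.mul_le_mul_left _ hr
  exact ⟨(pow_le_pow_right_of_le_one' hd (hn.trans hm)).trans (hn'.trans (pw_le_gr _ _ _ _)),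
    (pow_le_pow_right_of_le_one' hd (hk.trans hm)).trans (hk'.trans (pw_le_gr _ _ _ _))⟩

/-- Words of length at most `S`. -/
noncomputable def ballF (S : ℕ) : Finset Word := (List.finite_length_le Bool S).toFinset

lemma mem_ballF {S : ℕ} {r : Word} : r ∈ ballF S ↔ r.length ≤ S := by
  simp [ballF]

/-- The constant of the multiplicativity inequality. -/
noncomputable def cst (S K : ℕ) (δ₀ : ℝ) (L : ℝ≥0∞) : ℝ≥0∞ :=
  1 + (ballF S).card * ((ENNReal.ofReal δ₀ ^ (K * (S + 1)))⁻¹ * L) ^ 2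

lemma cut_gr (p : Word → Word → ℝ) (S : ℕ) (h1 : H1 p S)
    (δ₀ : ℝ) (K : ℕ) (h3 : H3 p δ₀ K) (hδ : 0 < δ₀)
    (hδ1 : δ₀ ≤ 1) (x : Word) (L : ℝ≥0∞) (hL : ∀ v, gr (resE (Delta x) p) v v ≤ L)
    (v s u : Delta x) (a : Bool) (hu : a :: v.1 <:+ u.1) (hs : ¬ a :: v.1 <:+ s.1) :
    gr (resE (Delta x) p) s u ≤
      cst S K δ₀ L * (gr (resE (Delta x) p) s v * gr (resE (Delta x) p) v u) ∧
    gr (resE (Delta x) p) u s ≤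
      cst S K δ₀ L * (gr (resE (Delta x) p) u v * gr (resE (Delta x) p) v s) := by
  set P := resE (Delta x) p with hP
  set ε := ENNReal.ofReal δ₀ ^ (K * (S + 1)) with hε
  have hε0 : ε ≠ 0 := pow_ne_zero _ (by simpa using hδ)
  have hε1 : ε ≠ ⊤ := ENNReal.pow_ne_top ENNReal.ofReal_ne_top
  let g : Word → Delta x := fun r => ⟨(r ++ [a]) ++ v.1, app_mem v.2 _⟩
  have hg : ∀ r, (g r).1 = r ++ a :: v.1 := fun r => by simp [g]
  have hPne : ∀ w w' : Delta x, P w w' ≠ 0 → treeDist w.1 w'.1 ≤ S := by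
    intro w w' h
    by_contra hc
    apply h
    simp [hP, resE, h1 _ _ (not_le.1 hc)]
  have hnear : ∀ r ∈ ballF S, ε ≤ gr P (g r) v ∧ ε ≤ gr P v (g r) := by
    intro r hr
    exact reach_gr p δ₀ K h3 hδ.le hδ1 x (S + 1) (r ++ [a]) v.1 v.2
      (by simpa using mem_ballF.1 hr)
  have fin : ∀ c e : Delta x, gr P c e ≤ ∑ f ∈ ballF S, gr P c (g f) * gr P (g f) e →
      gr P c e ≤ cst S K δ₀ L * (gr P c v * gr P v e) := by
    intro c e h
    refine h.trans ?_
    calc _ ≤ ∑ f ∈ ballF S, (ε⁻¹ * L * gr P c v) * (ε⁻¹ * L * gr P v e) := by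
          refine Finset.sum_le_sum fun r hr => mul_le_mul' ?_ ?_
          · exact near_right P L ε hε0 hε1 hL _ _ _ (hnear r hr).1
          · exact near_left P L ε hε0 hε1 hL _ _ _ (hnear r hr).2
      _ = ((ballF S).card * (ε⁻¹ * L) ^ 2) * (gr P c v * gr P v e) := by
          rw [Finset.sum_const, nsmul_eq_mul]; ring
      _ ≤ _ := mul_le_mul_left le_add_self _
  constructor
  · apply fin
    refine cut P (ballF S) g {w | ¬ a :: v.1 <:+ w.1 ∨ ∃ f ∈ ballF S, g f = w} u ?_ s (Or.inl hs)
    rintro w (hw | hw)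
    · right
      refine ⟨fun h => hw (h ▸ hu), fun w' hw' => ?_⟩
      by_cases hd : a :: v.1 <:+ w'.1
      · right
        obtain ⟨r, hr, hr'⟩ := enter_len a v.1 w.1 w'.1 S (hPne _ _ hw') hd hw
        exact ⟨r, mem_ballF.2 hr, Subtype.ext ((hg r).trans hr')⟩
      · exact Or.inl hd
    · exact Or.inl hw
  · apply fin
    refine cut P (ballF S) g {w | a :: v.1 <:+ w.1} s ?_ u hu
    intro w hw
    by_cases hB : ∃ f ∈ ballF S, g f = w
    · exact Or.inl hB
    · right
      refine ⟨fun h => hs (h ▸ hw), fun w' hw' => ?_⟩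
      by_contra hd
      obtain ⟨r, hr, hr'⟩ := enter_len a v.1 w'.1 w.1 S
        (by rw [treeDist_comm]; exact hPne _ _ hw') hw hd
      exact hB ⟨r, mem_ballF.2 hr, Subtype.ext ((hg r).trans hr')⟩

open Classical in
/-- The suffix of `s` of length `|x| + j`. -/
noncomputable def sfx (x s : Word) (j : ℕ) : Delta x :=
  if h : x <:+ s.drop (s.length - (x.length + j)) then ⟨_, h⟩ else ⟨x, List.suffix_rfl⟩

lemma sfx_eq (x s v : Word) (hx : x <:+ v) (hv : v <:+ s) :
    sfx x s (v.length - x.length) = ⟨v, hx⟩ := by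
  have h1 : x.length + (v.length - x.length) = v.length := by
    have := hx.length_le
    omega
  have h2 : s.drop (s.length - v.length) = v := (List.suffix_iff_eq_drop.1 hv).symm
  have : s.drop (s.length - (x.length + (v.length - x.length))) = v := by rw [h1, h2]
  unfold sfx
  rw [dif_pos (by rw [this]; exact hx)]
  exact Subtype.ext this

lemma point_bound (p : Word → Word → ℝ) (S : ℕ) (h1 : H1 p S)
    (δ₀ : ℝ) (K : ℕ) (h3 : H3 p δ₀ K) (hδ : 0 < δ₀)
    (hδ1 : δ₀ ≤ 1) (x : Word) (L : ℝ≥0∞) (hL : ∀ v, gr (resE (Delta x) p) v v ≤ L)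
    (Q : ℝ≥0∞) (hQ : Q ≤ 1)
    (s t u : Delta x) :
    Q ^ u.1.length * (gr (resE (Delta x) p) s u * gr (resE (Delta x) p) u t) ≤
      (cst S K δ₀ L ^ 2 * L * gr (resE (Delta x) p) s t) * ∑' j : ℕ, Q ^ (x.length + j) *
        (gr (resE (Delta x) p) (sfx x s.1 j) u * gr (resE (Delta x) p) u (sfx x s.1 j) +
        gr (resE (Delta x) p) (sfx x t.1 j) u * gr (resE (Delta x) p) u (sfx x t.1 j)) := by
  set P := resE (Delta x) p with hP
  set c := cst S K δ₀ L with hc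
  obtain ⟨u', hu'⟩ := u.2
  obtain ⟨v, hxv, hvu, hQv, hcase⟩ := exists_branch x (fun w => w <:+ s.1 ∨ w <:+ t.1)
    (Or.inl s.2) u'
  rw [hu'] at hvu hcase
  let V : Delta x := ⟨v, hxv⟩
  have hA : gr P s u ≤ c * (gr P s V * gr P V u) ∧ gr P u t ≤ c * (gr P u V * gr P V t) := by
    rcases hcase with h | ⟨a, h5, h6⟩
    · have : V = u := Subtype.ext h
      rw [this]
      have hc1 : 1 ≤ c := le_self_add
      have hone := one_le_gr P u
      constructor
      · calc gr P s u = 1 * (gr P s u * 1) := by simp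
          _ ≤ _ := by gcongr
      · calc gr P u t = 1 * (1 * gr P u t) := by simp
          _ ≤ _ := by gcongr
    · push Not at h6
      exact ⟨(cut_gr p S h1 δ₀ K h3 hδ hδ1 x L hL V s u a h5 h6.1).1,
        (cut_gr p S h1 δ₀ K h3 hδ hδ1 x L hL V t u a h5 h6.2).2⟩
  have hB : gr P s u * gr P u t ≤ (c ^ 2 * L * gr P s t) * (gr P V u * gr P u V) := by
    calc _ ≤ (c * (gr P s V * gr P V u)) * (c * (gr P u V * gr P V t)) := mul_le_mul' hA.1 hA.2
      _ = c ^ 2 * (gr P s V * gr P V t) * (gr P V u * gr P u V) := by ring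
      _ ≤ c ^ 2 * (L * gr P s t) * (gr P V u * gr P u V) := by
          refine mul_le_mul_left (mul_le_mul_right ?_ _) _
          exact (gr_mul_le P s V t).trans (mul_le_mul_left (hL V) _)
      _ = _ := by ring
  have hlen : x.length + (v.length - x.length) = v.length := by
    have := hxv.length_le
    omega
  have hq : Q ^ u.1.length ≤ Q ^ (x.length + (v.length - x.length)) := by
    rw [hlen]
    exact pow_le_pow_right_of_le_one' hQ hvu.length_le
  calc _ ≤ Q ^ (x.length + (v.length - x.length)) *
        ((c ^ 2 * L * gr P s t) * (gr P V u * gr P u V)) := mul_le_mul' hq hB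
    _ = (c ^ 2 * L * gr P s t) * (Q ^ (x.length + (v.length - x.length)) *
        (gr P V u * gr P u V)) := by ring
    _ ≤ _ := by
        refine mul_le_mul_right ?_ _
        refine le_trans ?_ (ENNReal.le_tsum (v.length - x.length))
        refine mul_le_mul_right ?_ _
        rcases hQv with h | h
        · rw [sfx_eq x s.1 v hxv h]; exact le_self_add
        · rw [sfx_eq x t.1 v hxv h]; exact le_add_self

lemma sum_bound (p : Word → Word → ℝ) (S : ℕ) (h1 : H1 p S)
    (δ₀ : ℝ) (K : ℕ) (h3 : H3 p δ₀ K) (hδ : 0 < δ₀)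
    (hδ1 : δ₀ ≤ 1) (x : Word) (L : ℝ≥0∞) (hL : ∀ v, gr (resE (Delta x) p) v v ≤ L)
    (hLL : ∀ v, ∑' u, gr (resE (Delta x) p) v u * gr (resE (Delta x) p) u v ≤ L * L)
    (Q : ℝ≥0∞) (hQ : Q ≤ 1) (s t : Delta x) :
    ∑' u : Delta x, Q ^ u.1.length * (gr (resE (Delta x) p) s u * gr (resE (Delta x) p) u t) ≤
      (cst S K δ₀ L ^ 2 * L * (2 * (L * L)) * ∑' j : ℕ, Q ^ j) * Q ^ x.length *
        gr (resE (Delta x) p) s t := by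
  refine (ENNReal.tsum_le_tsum fun u =>
    point_bound p S h1 δ₀ K h3 hδ hδ1 x L hL Q hQ s t u).trans ?_
  rw [ENNReal.tsum_mul_left, ENNReal.tsum_comm]
  simp_rw [ENNReal.tsum_mul_left, ENNReal.tsum_add]
  calc _ ≤ cst S K δ₀ L ^ 2 * L * gr (resE (Delta x) p) s t *
        ∑' j : ℕ, Q ^ (x.length + j) * (L * L + L * L) := by
        gcongr <;> exact hLL _
    _ = _ := by
        simp_rw [pow_add, mul_assoc]
        rw [ENNReal.tsum_mul_left, ENNReal.tsum_mul_right]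
        ring

end assembly
theorem lem_4_4 (q : ℝ) (hq : q ∈ Set.Ioo (0 : ℝ) 1) (S : ℕ)
    (δ₀ : ℝ) (hδ₀ : δ₀ ∈ Set.Ioo (0 : ℝ) 1) (K : ℕ)
    (lam : ℝ) (hlam : lam ∈ Set.Ioo (0 : ℝ) 1) (C : ℝ) (hC : 0 < C) :
    ∃ C₂ > (0 : ℝ), ∀ p : Word → Word → ℝ, (∀ s t, 0 ≤ p s t) →
      H1 p S → H2 p δ₀ → H3 p δ₀ K → ∀ m : Word → ℝ, H4 p m lam →
      ∀ z : Word, ∀ b : Word → Word → ℝ, Perturb p b z q C →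
      ∀ x ∈ Delta z, ∀ s ∈ Delta x, ∀ t ∈ Delta x,
        greenAbs (Delta x) b s t < ⊤ ∧
        greenE (Delta x) p s t < ⊤ ∧
        |greenR (Delta x) b s t - (greenE (Delta x) p s t).toReal| ≤
          C₂ * q ^ x.length * (greenE (Delta x) p s t).toReal := by
  obtain ⟨hq0, hq1⟩ := hq
  obtain ⟨hδ, hδ1⟩ := hδ₀
  obtain ⟨hl0, hl1⟩ := hlam
  have geo : ∀ r : ℝ, r < 1 → ∑' n : ℕ, ENNReal.ofReal r ^ n ≠ ⊤ := by
    intro r hr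
    rw [ENNReal.tsum_geometric]
    apply ENNReal.inv_ne_top.2
    have : ENNReal.ofReal r < 1 := by simpa using hr
    exact (tsub_pos_of_lt this).ne'
  set L : ℝ≥0∞ := ∑' n : ℕ, ENNReal.ofReal lam ^ n with hLdef
  set Q : ℝ≥0∞ := ENNReal.ofReal q with hQdef
  have hLtop : L ≠ ⊤ := geo lam hl1
  have hQtop : ∑' n : ℕ, Q ^ n ≠ ⊤ := geo q hq1
  have hctop : cst S K δ₀ L ≠ ⊤ := by
    have hε0 : ENNReal.ofReal δ₀ ^ (K * (S + 1)) ≠ 0 := pow_ne_zero _ (by simpa using hδ)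
    unfold cst
    refine ENNReal.add_ne_top.2 ⟨ENNReal.one_ne_top, ?_⟩
    refine ENNReal.mul_ne_top (ENNReal.natCast_ne_top _) (ENNReal.pow_ne_top ?_)
    exact ENNReal.mul_ne_top (ENNReal.inv_ne_top.2 hε0) hLtop
  set M : ℝ≥0∞ := ENNReal.ofReal (C / δ₀) *
    (cst S K δ₀ L ^ 2 * L * (2 * (L * L)) * ∑' j : ℕ, Q ^ j) with hM
  have hMtop : M ≠ ⊤ := by
    refine ENNReal.mul_ne_top ENNReal.ofReal_ne_top (ENNReal.mul_ne_top ?_ hQtop)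
    refine ENNReal.mul_ne_top (ENNReal.mul_ne_top (ENNReal.pow_ne_top hctop) hLtop) ?_
    exact ENNReal.mul_ne_top (by simp) (ENNReal.mul_ne_top hLtop hLtop)
  refine ⟨M.toReal + 1, by positivity, ?_⟩
  intro p hp h1 h2 h3 m h4 z b hb x hx s hs t ht
  have hsub : Delta x ⊆ Delta z := fun w hw => List.IsSuffix.trans hx hw
  set P := resE (Delta x) p with hP
  have hpw := pw_bound (Delta x) p hp (col_fin p S h1) m h4.1 lam hl0 h4.2
  have hdiag : ∀ (v : Delta x) n, pw P n v v ≤ ENNReal.ofReal lam ^ n := by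
    intro v n
    have := hpw v v n
    rwa [div_self (Real.sqrt_pos.2 (h4.1 _)).ne', mul_one, ENNReal.ofReal_pow hl0.le] at this
  have hL : ∀ v, gr P v v ≤ L := fun v => ENNReal.tsum_le_tsum (hdiag v)
  have hLL : ∀ v, ∑' u, gr P v u * gr P u v ≤ L * L := fun v =>
    gr_gr_le P (fun n => ENNReal.ofReal lam ^ n) (fun n k => pow_add _ n k) v (hdiag v)
  have hfin : gr P ⟨s, hs⟩ ⟨t, ht⟩ < ⊤ := by
    have : gr P ⟨s, hs⟩ ⟨t, ht⟩ ≤ L * ENNReal.ofReal (√(m t) / √(m s)) := by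
      rw [hLdef, ← ENNReal.tsum_mul_right]
      refine ENNReal.tsum_le_tsum fun n => ?_
      rw [← ENNReal.ofReal_pow hl0.le, ← ENNReal.ofReal_mul (by positivity)]
      exact hpw ⟨s, hs⟩ ⟨t, ht⟩ n
    exact lt_of_le_of_lt this (ENNReal.mul_lt_top hLtop.lt_top ENNReal.ofReal_lt_top)
  have hgE : greenE (Delta x) p s t = gr P ⟨s, hs⟩ ⟨t, ht⟩ := greenE_eq (Delta x) p ⟨s, hs⟩ ⟨t, ht⟩
  have hfinE : greenE (Delta x) p s t < ⊤ := by rw [hgE]; exact hfin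
  obtain ⟨hc1, hc2⟩ := compare (Delta x) p b
    (fun u hu v hv => (hb u v (hsub hu) (hsub hv)).1) ⟨s, hs⟩ ⟨t, ht⟩ hfinE
  refine ⟨hc1, hfinE, ?_⟩
  have he : ∀ u v : Delta x, ‖b u.1 v.1 - p u.1 v.1‖ₑ ≤
      ENNReal.ofReal (C / δ₀) * Q ^ u.1.length * P u v := by
    intro u v
    obtain ⟨hb1, hb2⟩ := hb u.1 v.1 (hsub u.2) (hsub v.2)
    rw [Real.enorm_eq_ofReal_abs, hQdef, ← ENNReal.ofReal_pow hq0.le,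
      ← ENNReal.ofReal_mul (by positivity), hP, resE, ← ENNReal.ofReal_mul (by positivity)]
    apply ENNReal.ofReal_le_ofReal
    rcases (hp u.1 v.1).eq_or_lt with h0 | h0
    · rw [← h0] at hb1 ⊢
      have : b u.1 v.1 = 0 := abs_nonpos_iff.1 hb1
      simp [this]
    · have h5 := h2 _ _ h0
      calc _ ≤ C * q ^ u.1.length := hb2
        _ = C / δ₀ * q ^ u.1.length * δ₀ := by field_simp
        _ ≤ _ := mul_le_mul_of_nonneg_left h5 (by positivity)
  have hmain : ‖greenR (Delta x) b s t - (greenE (Delta x) p s t).toReal‖ₑ ≤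
      M * Q ^ x.length * gr P ⟨s, hs⟩ ⟨t, ht⟩ := by
    refine hc2.trans ((dw_sum_le P _ _ _).trans ?_)
    calc _ ≤ ∑' u : Delta x, ENNReal.ofReal (C / δ₀) *
          (Q ^ u.1.length * (gr P ⟨s, hs⟩ u * gr P u ⟨t, ht⟩)) := by
          refine ENNReal.tsum_le_tsum fun u => ?_
          calc _ ≤ gr P ⟨s, hs⟩ u * ∑' v, ENNReal.ofReal (C / δ₀) * Q ^ u.1.length *
                (P u v * gr P v ⟨t, ht⟩) := by
                refine mul_le_mul_right (ENNReal.tsum_le_tsum fun v => ?_) _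
                rw [← mul_assoc]
                exact mul_le_mul_left (he u v) _
            _ ≤ gr P ⟨s, hs⟩ u * (ENNReal.ofReal (C / δ₀) * Q ^ u.1.length *
                gr P u ⟨t, ht⟩) := by
                rw [ENNReal.tsum_mul_left]
                exact mul_le_mul_right (mul_le_mul_right (Pgr_le P _ _) _) _
            _ = _ := by ring
      _ ≤ _ := by
          rw [ENNReal.tsum_mul_left, hM, mul_assoc, mul_assoc (ENNReal.ofReal (C / δ₀)), ← mul_assoc _ (Q ^ x.length)]
          refine mul_le_mul_right ?_ _
          exact sum_bound p S h1 δ₀ K h3 hδ hδ1.le x L hL hLL Q (by simpa [hQdef] using hq1.le) _ _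
  have hRtop : M * Q ^ x.length * gr P ⟨s, hs⟩ ⟨t, ht⟩ ≠ ⊤ :=
    ENNReal.mul_ne_top (ENNReal.mul_ne_top hMtop (ENNReal.pow_ne_top ENNReal.ofReal_ne_top)) hfin.ne
  have h6 := ENNReal.toReal_mono hRtop hmain
  rw [toReal_enorm, Real.norm_eq_abs, ENNReal.toReal_mul, ENNReal.toReal_mul, ENNReal.toReal_pow,
    hQdef, ENNReal.toReal_ofReal hq0.le, ← hgE] at h6
  refine h6.trans ?_
  gcongr
  linarith

end Paper
end

section
/- Fix q ∈ (0,1) and let μ be a finitely supported probability measure on I with μ(e) < 1. Set m(x) = dim_q(x)² and λ = Σ_r μ(r)·dim(r)/dim_q(r). Then λ < 1, and the operator (Pf)(s) = Σ_t p_μ(s,t)·f(t), defined on finitely supported functions, extends to a bounded operator on ℓ²(I,m) of norm at most λ. (Lemma 4.1 of the paper, first part.) -/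
open scoped ENNReal

namespace Paper

theorem blockLens_ne (a : Bool) (x : Word) : ∃ k ks, blockLens (a :: x) = k :: ks := by
  cases x with
  | nil => exact ⟨1, [], rfl⟩
  | cons b r =>
    rw [blockLens]
    split
    · exact ⟨_, _, rfl⟩
    · split_ifs <;> exact ⟨_, _, rfl⟩

theorem blockLens_pos : ∀ (x : Word), ∀ k ∈ blockLens x, 1 ≤ k
  | [] => by simp [blockLens]
  | [a] => by simp [blockLens]
  | a :: b :: r => by
    have ih := blockLens_pos (b :: r)
    obtain ⟨k, ks, h⟩ := blockLens_ne b r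
    rw [h] at ih
    rw [blockLens, h]
    simp only
    simp only [List.mem_cons, forall_eq_or_imp] at ih
    split_ifs
    · simp only [List.mem_cons, forall_eq_or_imp]
      exact ⟨le_rfl, ih⟩
    · simp only [List.mem_cons, forall_eq_or_imp]
      exact ⟨by omega, ih.2⟩

theorem dimn_eq (x : Word) : dimn x = ((blockLens x).map fun L : ℕ => (L : ℝ) + 1).prod := by
  unfold dimn
  generalize blockLens x = l
  induction l with
  | nil => simp
  | cons k l ih => simp at ih ⊢; exact Or.inl ih

theorem dimn_nil : dimn [] = 1 := by simp [dimn, blockLens]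
theorem dimn_one (a : Bool) : dimn [a] = 2 := by simp [dimn, blockLens]; norm_num

theorem dimn_rec (a b : Bool) (x : Word) :
    dimn (a :: b :: x) = 2 * dimn (b :: x) - (if a = b then 0 else dimn x) := by
  cases x with
  | nil =>
    by_cases h : a = b
    · simp [dimn, blockLens, h]; norm_num
    · simp [dimn, blockLens, h]; norm_num
  | cons c y =>
    obtain ⟨k, ks, h⟩ := blockLens_ne c y
    by_cases h1 : a = b
    · subst h1
      by_cases h2 : a = c
      · subst h2
        simp only [dimn_eq, blockLens, h, if_true, List.map_cons, List.prod_cons]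
        push_cast; ring
      · simp only [dimn_eq, blockLens, h, h2, if_true, if_false, List.map_cons, List.prod_cons]
        push_cast; ring
    · by_cases h2 : b = c
      · subst h2
        simp only [dimn_eq, blockLens, h, h1, if_true, if_false, List.map_cons, List.prod_cons]
        push_cast; ring
      · simp only [dimn_eq, blockLens, h, h1, h2, if_false, List.map_cons, List.prod_cons]
        push_cast; ring

theorem dimn_euler (b : Bool) (y : Word) : ∀ (x : Word) (a : Bool),
    dimn (x ++ a :: b :: y) = dimn (x ++ [a]) * dimn (b :: y)
      - (if a = b then 0 else dimn x * dimn y)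
  | [], a => by
    simp only [List.nil_append, dimn_rec, dimn_one, dimn_nil, one_mul]
  | [c], a => by
    simp only [List.cons_append, List.nil_append, dimn_rec, dimn_one, dimn_nil]
    split_ifs <;> ring
  | c :: d :: x, a => by
    have h1 := dimn_euler b y (d :: x) a
    have h2 := dimn_euler b y x a
    simp only [List.cons_append] at h1 h2 ⊢
    rw [dimn_rec c d, dimn_rec c d, dimn_rec c d, h1, h2]
    split_ifs <;> ring

theorem dimn_bar : ∀ (x : Word), dimn (bar x) = dimn x
  | [] => rfl
  | [a] => by simp [bar, dimn_one]
  | a :: b :: x => by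
    have h1 := dimn_bar (b :: x)
    have h2 := dimn_bar x
    have h := dimn_euler (!a) [] (bar x) (!b)
    have e1 : bar (a :: b :: x) = bar x ++ (!b) :: (!a) :: [] := by simp [bar]
    have e2 : bar (b :: x) = bar x ++ [!b] := by simp [bar]
    rw [e1, h, ← e2, h1, h2, dimn_rec, dimn_one, dimn_nil]
    have : ((!b) = !a) ↔ a = b := by cases a <;> cases b <;> simp
    simp only [this]
    split_ifs <;> ring

theorem dimn_pos (x : Word) : 0 < dimn x := by
  rw [dimn_eq]
  apply List.prod_pos
  intro a ha
  obtain ⟨k, -, rfl⟩ := List.mem_map.1 ha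
  positivity

theorem qInt_aux {q : ℝ} (h0 : 0 < q) (h1 : q < 1) (n : ℕ) :
    (n : ℝ) + 1 ≤ qInt q (n + 1) ∧ qInt q (n + 1) + 1 < qInt q (n + 2) := by
  have hne : q ≠ 0 := h0.ne'
  have hi : 1 < q⁻¹ := (one_lt_inv₀ h0).2 h1
  have hd : q⁻¹ - q ≠ 0 := by linarith
  have hm : q⁻¹ * q = 1 := inv_mul_cancel₀ hne
  have hs : 2 < q + q⁻¹ := by nlinarith [mul_pos (sub_pos.2 hi) (sub_pos.2 h1)]
  have hrec : ∀ n, qInt q (n + 2) = (q + q⁻¹) * qInt q (n + 1) - qInt q n := by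
    intro n
    unfold qInt
    rw [mul_div_assoc', div_sub_div_same]
    congr 1
    simp only [zpow_neg, zpow_natCast, ← inv_pow]
    generalize q⁻¹ = p at *
    have : ∀ a b : ℝ, (q+p) * (p^(n+1) - q^(n+1)) - (p^n - q^n)
      = p^(n+2) - q^(n+2) + (p * q - 1) * (p^n - q^n) := by intros; ring
    rw [this 0 0, hm]; ring
  have q0 : qInt q 0 = 0 := by simp [qInt]
  have q1 : qInt q 1 = 1 := by simp [qInt, hd]
  induction n with
  | zero =>
    have := hrec 0
    simp only [zero_add, q0, q1] at this ⊢
    rw [this]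
    constructor
    · simp
    · linarith
  | succ n ih =>
    obtain ⟨i1, i2⟩ := ih
    have := hrec (n+1)
    have hn : (0:ℝ) ≤ n := Nat.cast_nonneg n
    push_cast
    refine ⟨by linarith, ?_⟩
    rw [this]
    show qInt q (n+2) + 1 < (q + q⁻¹) * qInt q (n+2) - qInt q (n+1)
    nlinarith

theorem prod_cmp (A B : ℕ → ℝ) (l : List ℕ) (h : ∀ k ∈ l, 0 < A k ∧ A k < B k) :
    0 < (l.map A).prod ∧ (l.map A).prod ≤ (l.map B).prod ∧
      (l ≠ [] → (l.map A).prod < (l.map B).prod) := by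
  induction l with
  | nil => simp
  | cons k l ih =>
    obtain ⟨i1, i2, -⟩ := ih (fun j hj => h j (List.mem_cons_of_mem _ hj))
    obtain ⟨h1, h2⟩ := h k List.mem_cons_self
    simp only [List.map_cons, List.prod_cons]
    have : A k * (l.map A).prod < B k * (l.map B).prod := by
      calc _ < B k * (l.map A).prod := by gcongr
        _ ≤ _ := by have := h1.trans h2; gcongr
    exact ⟨by positivity, this.le, fun _ => this⟩

theorem dim_cmp {q : ℝ} (h0 : 0 < q) (h1 : q < 1) (x : Word) :
    dimn x ≤ dimq q x ∧ (x ≠ [] → dimn x < dimq q x) := by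
  have := prod_cmp (fun L => (L + 1 : ℝ)) (fun L => qInt q (L + 1)) (blockLens x) (by
    intro k hk
    refine ⟨by positivity, ?_⟩
    have := blockLens_pos x k hk
    obtain ⟨j, rfl⟩ : ∃ j, k = j + 1 := ⟨k - 1, by omega⟩
    have := qInt_aux h0 h1 j
    push_cast
    show (j:ℝ) + 1 + 1 < qInt q (j + 2)
    linarith)
  rw [dimn_eq]
  refine ⟨this.2.1, fun hx => this.2.2 ?_⟩
  cases x with
  | nil => simp at hx
  | cons a x =>
    obtain ⟨k, ks, h⟩ := blockLens_ne a x
    simp [h]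

def Zset (r s t : Word) : Set Word :=
  {z : Word | ∃ r₀ s₀ : Word, r = r₀ ++ z ∧ s = bar z ++ s₀ ∧ t = r₀ ++ s₀}

theorem Zset_finite (r s t : Word) : (Zset r s t).Finite := by
  apply Set.Finite.subset (List.finite_toSet r.tails)
  rintro z ⟨r₀, s₀, h, -⟩
  simp only [Set.mem_ofPred_eq, List.mem_tails]
  exact ⟨r₀, h.symm⟩

theorem bar_length (x : Word) : (bar x).length = x.length := by simp [bar]

theorem bar_bar (x : Word) : bar (bar x) = x := by simp [bar, Function.comp_def]

theorem bar_append (x y : Word) : bar (x ++ y) = bar y ++ bar x := by simp [bar]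

theorem fuse_le_bar (r s t : Word) : fuse r s t ≤ fuse (bar r) t s := by
  refine Set.ncard_le_ncard_of_injOn (s := Zset r s t) (t := Zset (bar r) t s)
    (fun z => bar (r.take (r.length - z.length))) ?_ ?_ (Zset_finite (bar r) t s)
  · rintro z ⟨r₀, s₀, h1, h2, h3⟩
    have : r.take (r.length - z.length) = r₀ := by simp [h1]
    simp only [this]
    exact ⟨bar z, s₀, by rw [h1, bar_append], by rw [bar_bar, h3], h2⟩
  · rintro z ⟨r₀, s₀, h1, h2, h3⟩ z' ⟨r₀', s₀', h1', h2', h3'⟩ he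
    have e : r.take (r.length - z.length) = r₀ := by simp [h1]
    have e' : r.take (r.length - z'.length) = r₀' := by simp [h1']
    simp only [e, e'] at he
    have : r₀ = r₀' := by rw [← bar_bar r₀, he, bar_bar]
    subst this
    rw [h1] at h1'
    exact List.append_cancel_left h1'

theorem fuse_base (r s t : Word) (h : r = [] ∨ s = []) :
    fuse r s t ≤ if t = r ++ s then 1 else 0 := by
  have hz : ∀ z ∈ Zset r s t, z = [] ∧ t = r ++ s := by
    rintro z ⟨r₀, s₀, h1, h2, h3⟩
    have : z = [] := by
      rcases h with h | h
      · rw [h] at h1; simp at h1; exact h1.2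
      · rw [h] at h2
        have := congrArg List.length h2
        simp [bar_length] at this
        apply List.length_eq_zero_iff.1; omega
    subst this
    refine ⟨rfl, ?_⟩
    simp [bar] at h1 h2
    rw [h1, h2, h3]
  split_ifs with ht
  · refine (Set.ncard_le_ncard (t := {[]}) (fun z hz' => (hz z hz').1)).trans (by simp)
  · have : Zset r s t = ∅ := by
      ext z; simp only [Set.mem_empty_iff_false, iff_false]
      exact fun h => ht (hz z h).2
    show (Zset r s t).ncard ≤ 0
    rw [this]; simp

theorem fuse_step (r s t : Word) (a b : Bool) :
    fuse (r ++ [a]) (b :: s) t ≤ (if t = r ++ a :: b :: s then 1 else 0) +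
      (if a = b then 0 else fuse r s t) := by
  have hsub : Zset (r ++ [a]) (b :: s) t ⊆ (if t = r ++ a :: b :: s then {[]} else ∅) ∪
      (if a = b then ∅ else (fun z => z ++ [a]) '' Zset r s t) := by
    rintro z ⟨r₀, s₀, h1, h2, h3⟩
    rcases List.eq_nil_or_concat z with rfl | ⟨z', c, rfl⟩
    · left
      simp [bar] at h1 h2
      rw [if_pos]
      · rfl
      · rw [h3, ← h1, ← h2]; simp
    · right
      rw [List.concat_eq_append] at h1 h2 ⊢
      rw [← List.append_assoc] at h1
      obtain ⟨e1, e2⟩ := List.append_inj' h1 rfl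
      simp at e2
      subst e2
      simp [bar] at h2
      rw [if_neg (by rw [h2.1]; cases a <;> simp)]
      exact ⟨z', ⟨r₀, s₀, e1, by simp [bar, h2.2], h3⟩, rfl⟩
  have hfin : ((if t = r ++ a :: b :: s then {[]} else ∅) ∪
      (if a = b then ∅ else (fun z => z ++ [a]) '' Zset r s t) : Set Word).Finite := by
    apply Set.Finite.union
    · split_ifs <;> simp
    · split_ifs
      · simp
      · exact (Zset_finite _ _ _).image _
  refine (Set.ncard_le_ncard hsub hfin).trans ((Set.ncard_union_le _ _).trans ?_)
  gcongr
  · split_ifs <;> simp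
  · split_ifs
    · simp
    · exact Set.ncard_image_le (Zset_finite _ _ _)

theorem row_base (r s : Word) (h : r = [] ∨ s = []) (T : Finset Word) :
    ∑ t ∈ T, (fuse r s t : ℝ) * dimn t ≤ dimn (r ++ s) := by
  calc _ ≤ ∑ t ∈ T, (if t = r ++ s then dimn (r ++ s) else 0) := by
        apply Finset.sum_le_sum
        intro t _
        have h1 : (fuse r s t : ℝ) ≤ ((if t = r ++ s then 1 else 0 : ℕ) : ℝ) := by
          exact_mod_cast fuse_base r s t h
        have h2 := mul_le_mul_of_nonneg_right h1 (dimn_pos t).le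
        refine h2.trans (le_of_eq ?_)
        split_ifs with e <;> simp [e]
    _ ≤ _ := by
        rw [Finset.sum_ite_eq']
        split_ifs
        · exact le_rfl
        · exact (dimn_pos _).le

theorem row_sum (T : Finset Word) (r : Word) : ∀ s : Word,
    ∑ t ∈ T, (fuse r s t : ℝ) * dimn t ≤ dimn r * dimn s := by
  induction r using List.reverseRecOn with
  | nil =>
    intro s
    refine (row_base [] s (Or.inl rfl) T).trans ?_
    simp [dimn_nil]
  | append_singleton r a ih =>
    intro s
    cases s with
    | nil =>
      refine (row_base _ [] (Or.inr rfl) T).trans ?_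
      simp [dimn_nil]
    | cons b s =>
      have he := dimn_euler b s r a
      calc _ ≤ ∑ t ∈ T, ((if t = r ++ a :: b :: s then dimn (r ++ a :: b :: s) else 0) +
              (if a = b then 0 else (fuse r s t : ℝ) * dimn t)) := by
            apply Finset.sum_le_sum
            intro t _
            have h1 : (fuse (r ++ [a]) (b :: s) t : ℝ) ≤
              (((if t = r ++ a :: b :: s then 1 else 0) +
                (if a = b then 0 else fuse r s t) : ℕ) : ℝ) := by
              exact_mod_cast fuse_step r s t a b
            have h2 := mul_le_mul_of_nonneg_right h1 (dimn_pos t).le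
            refine h2.trans (le_of_eq ?_)
            push_cast
            rw [add_mul]
            congr 1
            · split_ifs with e <;> simp [e]
            · split_ifs <;> simp
        _ ≤ dimn (r ++ a :: b :: s) + (if a = b then 0 else dimn r * dimn s) := by
            rw [Finset.sum_add_distrib, Finset.sum_ite_eq']
            apply add_le_add
            · split_ifs
              · exact le_rfl
              · exact (dimn_pos _).le
            · split_ifs
              · simp
              · exact ih s
        _ = _ := by rw [he]; ring

theorem col_sum (S : Finset Word) (r t : Word) :
    ∑ s ∈ S, (fuse r s t : ℝ) * dimn s ≤ dimn r * dimn t := by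
  rw [← dimn_bar r]
  refine le_trans (Finset.sum_le_sum fun s _ => ?_) (row_sum S (bar r) t)
  have : (fuse r s t : ℝ) ≤ fuse (bar r) t s := by exact_mod_cast fuse_le_bar r s t
  exact mul_le_mul_of_nonneg_right this (dimn_pos s).le

theorem schur {X : Type*} (S T : Finset X) (a : X → X → ℝ) (w : X → ℝ) (C : ℝ)
    (ha : ∀ s t, 0 ≤ a s t) (hw : ∀ x, 0 < w x)
    (h1 : ∀ s, ∑ t ∈ T, a s t * w t ≤ C * w s)
    (h2 : ∀ t, ∑ s ∈ S, a s t * w s ≤ C * w t) (hC : 0 ≤ C) (F G : X → ℝ) :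
    |∑ s ∈ S, ∑ t ∈ T, a s t * G s * F t| ≤
      C * √(∑ t ∈ T, F t ^ 2) * √(∑ s ∈ S, G s ^ 2) := by
  have hG : ∑ p ∈ S ×ˢ T, (√(a p.1 p.2 * w p.2 / w p.1) * G p.1) ^ 2 ≤ C * ∑ s ∈ S, G s ^ 2 := by
    rw [Finset.sum_product, Finset.mul_sum]
    apply Finset.sum_le_sum
    intro s _
    have : ∀ t, (√(a s t * w t / w s) * G s) ^ 2 = (a s t * w t) * (G s ^ 2 / w s) := by
      intro t
      rw [mul_pow, Real.sq_sqrt (div_nonneg (mul_nonneg (ha _ _) (hw _).le) (hw _).le)]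
      ring
    simp only [this]
    rw [← Finset.sum_mul]
    have hs := hw s
    calc _ ≤ (C * w s) * (G s ^ 2 / w s) := by gcongr; exact h1 s
      _ = _ := by field_simp
  have hF : ∑ p ∈ S ×ˢ T, (√(a p.1 p.2 * w p.1 / w p.2) * F p.2) ^ 2 ≤ C * ∑ t ∈ T, F t ^ 2 := by
    rw [Finset.sum_product_right, Finset.mul_sum]
    apply Finset.sum_le_sum
    intro t _
    have : ∀ s, (√(a s t * w s / w t) * F t) ^ 2 = (a s t * w s) * (F t ^ 2 / w t) := by
      intro s
      rw [mul_pow, Real.sq_sqrt (div_nonneg (mul_nonneg (ha _ _) (hw _).le) (hw _).le)]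
      ring
    simp only [this]
    rw [← Finset.sum_mul]
    have hs := hw t
    calc _ ≤ (C * w t) * (F t ^ 2 / w t) := by gcongr; exact h2 t
      _ = _ := by field_simp
  have key : ∑ s ∈ S, ∑ t ∈ T, a s t * G s * F t = ∑ p ∈ S ×ˢ T,
      (√(a p.1 p.2 * w p.2 / w p.1) * G p.1) * (√(a p.1 p.2 * w p.1 / w p.2) * F p.2) := by
    rw [Finset.sum_product]
    refine Finset.sum_congr rfl fun s _ => Finset.sum_congr rfl fun t _ => ?_
    have hs := hw s
    have ht := hw t
    have : √(a s t * w t / w s) * √(a s t * w s / w t) = a s t := by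
      rw [← Real.sqrt_mul (div_nonneg (mul_nonneg (ha _ _) ht.le) hs.le)]
      rw [show a s t * w t / w s * (a s t * w s / w t) = a s t ^ 2 by field_simp]
      exact Real.sqrt_sq (ha _ _)
    calc _ = (√(a s t * w t / w s) * √(a s t * w s / w t)) * G s * F t := by rw [this]
      _ = _ := by ring
  rw [key]
  have cs := Finset.sum_mul_sq_le_sq_mul_sq (S ×ˢ T)
    (fun p => √(a p.1 p.2 * w p.2 / w p.1) * G p.1)
    (fun p => √(a p.1 p.2 * w p.1 / w p.2) * F p.2)
  apply abs_le_of_sq_le_sq _ (by positivity)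
  refine cs.trans ?_
  rw [mul_pow, mul_pow, Real.sq_sqrt (Finset.sum_nonneg fun _ _ => sq_nonneg _),
    Real.sq_sqrt (Finset.sum_nonneg fun _ _ => sq_nonneg _)]
  calc _ ≤ (C * ∑ s ∈ S, G s ^ 2) * (C * ∑ t ∈ T, F t ^ 2) := by
        apply mul_le_mul hG hF (Finset.sum_nonneg fun _ _ => sq_nonneg _)
        exact mul_nonneg hC (Finset.sum_nonneg fun _ _ => sq_nonneg _)
    _ = _ := by ring

/-- Lemma 4.1, first part: with `m(x) = dim_q(x)²` and `λ = Σ_r μ(r) dim(r)/dim_q(r)`,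
one has `λ < 1` and the Markov operator of `p_μ` is bounded of norm at most `λ`
on `ℓ²(I,m)`. -/
theorem lem_4_1a (q : ℝ) (hq : q ∈ Set.Ioo (0 : ℝ) 1) (μ : Word → ℝ)
    (hμ : IsProbMeasure μ) (hμe : μ [] < 1) :
    (∑' r, μ r * dimn r / dimq q r) < 1 ∧
    opNormBound (fun x => dimq q x ^ 2) (pMu q μ) (∑' r, μ r * dimn r / dimq q r) := by
  obtain ⟨h0, h1⟩ := hq
  obtain ⟨hnn, hfin, hsum⟩ := hμ
  set R := hfin.toFinset with hR
  have hz : ∀ r, r ∉ R → μ r = 0 := by intro r hr; simpa [hR] using hr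
  have hdq : ∀ x, 0 < dimq q x := fun x => (dimn_pos x).trans_le (dim_cmp h0 h1 x).1
  have hlam : (∑' r, μ r * dimn r / dimq q r) = ∑ r ∈ R, μ r * dimn r / dimq q r :=
    tsum_eq_sum (fun r hr => by simp [hz r hr])
  rw [tsum_eq_sum (s := R) hz] at hsum
  have hle : ∀ r, μ r * dimn r / dimq q r ≤ μ r := by
    intro r
    rw [div_le_iff₀ (hdq r)]
    exact mul_le_mul_of_nonneg_left (dim_cmp h0 h1 r).1 (hnn r)
  rw [hlam]
  constructor
  · rw [← hsum]
    apply Finset.sum_lt_sum (fun r _ => hle r)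
    by_contra! hcon
    have : ∀ r ∈ R, r = [] := by
      intro r hr
      by_contra hne
      have hr' : 0 < μ r := lt_of_le_of_ne (hnn r) (by
        have : μ r ≠ 0 := by simpa [hR] using hr
        exact this.symm)
      have h3 := hcon r hr
      rw [le_div_iff₀ (hdq r)] at h3
      have := mul_lt_mul_of_pos_left ((dim_cmp h0 h1 r).2 hne) hr'
      linarith
    have h4 : ∑ r ∈ R, μ r ≤ ∑ r ∈ {[]}, μ r :=
      Finset.sum_le_sum_of_subset_of_nonneg (fun r hr => by simp [this r hr]) (fun r _ _ => hnn r)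
    simp at h4
    linarith
  · intro f g hf hg
    set T := hf.toFinset with hT
    set S := hg.toFinset with hS
    have hfz : ∀ t, t ∉ T → f t = 0 := by intro r hr; simpa [hT] using hr
    have hgz : ∀ t, t ∉ S → g t = 0 := by intro r hr; simpa [hS] using hr
    have e1 : ∀ s, ∑' t, pMu q μ s t * f t = ∑ t ∈ T, pMu q μ s t * f t := fun s =>
      tsum_eq_sum (fun t ht => by simp [hfz t ht])
    have e2 : ∀ s t, pMu q μ s t =
        ∑ r ∈ R, μ r * (fuse r s t : ℝ) * dimq q t / (dimq q r * dimq q s) := fun s t =>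
      tsum_eq_sum (fun r hr => by simp [hz r hr])
    have e3 : ∑' x, dimq q x ^ 2 * f x ^ 2 = ∑ t ∈ T, (dimq q t * f t) ^ 2 := by
      rw [tsum_eq_sum (s := T) (fun t ht => by simp [hfz t ht])]
      exact Finset.sum_congr rfl fun _ _ => by ring
    have e4 : ∑' x, dimq q x ^ 2 * g x ^ 2 = ∑ t ∈ S, (dimq q t * g t) ^ 2 := by
      rw [tsum_eq_sum (s := S) (fun t ht => by simp [hgz t ht])]
      exact Finset.sum_congr rfl fun _ _ => by ring
    have e5 : ∑' s, dimq q s ^ 2 * g s * ∑' t, pMu q μ s t * f t =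
        ∑ r ∈ R, μ r / dimq q r * ∑ s ∈ S, ∑ t ∈ T,
          (fuse r s t : ℝ) * (dimq q s * g s) * (dimq q t * f t) := by
      rw [tsum_eq_sum (s := S) (fun t ht => by simp [hgz t ht])]
      simp only [e1]
      simp only [e2, Finset.mul_sum, Finset.sum_mul]
      rw [Finset.sum_comm' (s := R) (t := fun _ => S) (t' := S) (s' := fun _ => R) (by simp [and_comm])]
      refine Finset.sum_congr rfl fun s _ => ?_
      rw [Finset.sum_comm]
      refine Finset.sum_congr rfl fun r _ => Finset.sum_congr rfl fun t _ => ?_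
      have := (hdq s).ne'
      have := (hdq r).ne'
      field_simp
    show |∑' s, dimq q s ^ 2 * g s * ∑' t, pMu q μ s t * f t| ≤ _ * √(∑' x, dimq q x ^ 2 * f x ^ 2) *
      √(∑' x, dimq q x ^ 2 * g x ^ 2)
    rw [e3, e4, e5, Finset.sum_mul, Finset.sum_mul]
    refine (Finset.abs_sum_le_sum_abs _ _).trans (Finset.sum_le_sum fun r _ => ?_)
    have hc : 0 ≤ μ r / dimq q r := div_nonneg (hnn r) (hdq r).le
    rw [abs_mul, abs_of_nonneg hc]
    have := schur S T (fun s t => (fuse r s t : ℝ)) dimn (dimn r) (fun _ _ => Nat.cast_nonneg _)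
      dimn_pos (row_sum T r) (col_sum S r) (dimn_pos r).le
      (fun t => dimq q t * f t) (fun s => dimq q s * g s)
    refine (mul_le_mul_of_nonneg_left this hc).trans (le_of_eq ?_)
    ring

end Paper
end
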